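/- Let X ⊆ ℝ^n be a nonempty closed convex set, Ξ ⊆ ℝ^m a nonempty closed cone, and g : X × Ξ → ℝ such that g(·, z) is convex and lower semicontinuous for each fixed z ∈ Ξ and g(x, ·) is continuous for each fixed x ∈ X. Suppose two triples (γ₁, ρ₁, g₁*) and (γ₂, ρ₂, g₂*), with γ₁, γ₂ ≠ 0 and ρ₁, ρ₂ ≥ 0, both satisfy conditions (A1), (A2), (A3), and (A4) of Assumption 2 for this g. Then γ₁ = γ₂ and ρ₁ = ρ₂. -/

import Mathlib

open Filter Topology MeasureTheory Set

noncomputable section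

/-- Euclidean space `ℝ^d`. -/
abbrev Rn (d : ℕ) : Type := EuclideanSpace ℝ (Fin d)

/-- A set is a cone: closed under multiplication by positive scalars. -/
def IsPosCone {d : ℕ} (Z : Set (Rn d)) : Prop :=
  ∀ c : ℝ, 0 < c → ∀ z ∈ Z, c • z ∈ Z

/-- The asymptotic cone `A^∞_θ` of a set `A` with rate `θ`. -/
def asymCone {d : ℕ} (A : Set (Rn d)) (θ : ℝ) : Set (Rn d) :=
  {y | ∃ a : ℕ → Rn d, ∃ lamk : ℕ → ℝ,
    (∀ k, a k ∈ A) ∧ (∀ k, 0 < lamk k) ∧ Tendsto lamk atTop atTop ∧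
    Tendsto (fun k => (lamk k ^ θ)⁻¹ • a k) atTop (𝓝 y)}

/-- Condition (A1): `gs` is a continuous limit function on `X^∞_γ × Ξ` and
`g(x_u, z_u)/u^ρ → gs(y, w)` along all admissible families. -/
def CondA1 {n m : ℕ} (X : Set (Rn n)) (Ξ : Set (Rn m)) (g : Rn n → Rn m → ℝ)
    (γ ρ : ℝ) (gs : Rn n → Rn m → ℝ) : Prop :=
  ContinuousOn (fun p : Rn n × Rn m => gs p.1 p.2) ((asymCone X γ) ×ˢ Ξ) ∧
  ∀ y ∈ asymCone X γ, ∀ w ∈ Ξ, ∀ xu : ℝ → Rn n, ∀ zu : ℝ → Rn m,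
    (∀ u : ℝ, 0 < u → xu u ∈ X) → (∀ u : ℝ, 0 < u → zu u ∈ Ξ) →
    Tendsto (fun u : ℝ => (u ^ γ)⁻¹ • xu u) atTop (𝓝 y) →
    Tendsto (fun u : ℝ => u⁻¹ • zu u) atTop (𝓝 w) →
    Tendsto (fun u : ℝ => g (xu u) (zu u) / u ^ ρ) atTop (𝓝 (gs y w))

/-- Condition (A2): `X^∞_γ \ {0} ≠ ∅`. -/
def CondA2 {n : ℕ} (X : Set (Rn n)) (γ : ℝ) : Prop :=
  (asymCone X γ \ {0}).Nonempty

/-- Condition (A3): `gs(y, 0) < 0` for all `y ∈ X^∞_γ \ {0}`. -/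
def CondA3 {n m : ℕ} (X : Set (Rn n)) (γ : ℝ) (gs : Rn n → Rn m → ℝ) : Prop :=
  ∀ y ∈ asymCone X γ \ {0}, gs y 0 < 0

/-- Condition (A4): every `y ∈ X^∞_γ \ {0}` admits `w ∈ Ξ` with `gs(y, w) > 0`. -/
def CondA4 {n m : ℕ} (X : Set (Rn n)) (Ξ : Set (Rn m)) (γ : ℝ)
    (gs : Rn n → Rn m → ℝ) : Prop :=
  ∀ y ∈ asymCone X γ \ {0}, ∃ w ∈ Ξ, 0 < gs y w

/-- Condition (A5): if `γ < 0` then `g(0, z) ≤ 0` for all `z ∈ Ξ`. -/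
def CondA5 {n m : ℕ} (Ξ : Set (Rn m)) (g : Rn n → Rn m → ℝ) (γ : ℝ) : Prop :=
  γ < 0 → ∀ z ∈ Ξ, g 0 z ≤ 0

/-- Regularity preconditions of Assumption 2: `X` nonempty closed convex, `Ξ` a
nonempty closed cone, `g(·, z)` convex and lower semicontinuous on `X` for each
`z ∈ Ξ`, and `g(x, ·)` continuous on `Ξ` for each `x ∈ X`. -/
def GRegular {n m : ℕ} (X : Set (Rn n)) (Ξ : Set (Rn m))
    (g : Rn n → Rn m → ℝ) : Prop :=
  X.Nonempty ∧ IsClosed X ∧ Convex ℝ X ∧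
  Ξ.Nonempty ∧ IsClosed Ξ ∧ IsPosCone Ξ ∧
  (∀ z ∈ Ξ, ConvexOn ℝ X (fun x => g x z)) ∧
  (∀ z ∈ Ξ, LowerSemicontinuousOn (fun x => g x z) X) ∧
  (∀ x ∈ X, ContinuousOn (fun z => g x z) Ξ)

/-- Assumption 2: the regularity preconditions together with conditions (A1)–(A5)
for exponents `(γ, ρ)` with `γ ≠ 0`, `ρ ≥ 0`, and limit function `gs`. -/
def Assumption2 {n m : ℕ} (X : Set (Rn n)) (Ξ : Set (Rn m)) (g : Rn n → Rn m → ℝ)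
    (γ ρ : ℝ) (gs : Rn n → Rn m → ℝ) : Prop :=
  GRegular X Ξ g ∧ γ ≠ 0 ∧ 0 ≤ ρ ∧
  CondA1 X Ξ g γ ρ gs ∧ CondA2 X γ ∧ CondA3 X γ gs ∧ CondA4 X Ξ γ gs ∧
  CondA5 Ξ g γ

/-!
Only the sign of `g` along suitable curves matters for `γ`.

*Equal signs.* Write `γ₁ = r γ₂` with `r > 0`, suppose `r < 1`, and let `x_u ∈ X` be a curve with
`x_u / u ^ γ₁ → y ≠ 0`. In the second scaling, at time `u ^ r`, the pair `(x_u, u ^ r w)` has limit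
`(y, w)`, where `w` can be chosen so that `g` is eventually positive by (A4). In the first scaling
it has limit `(y, 0)`, so `g` is eventually negative by (A3). Hence `r ≥ 1`, and `r = 1` by
symmetry.

*Opposite signs.* If `γ₂ < 0 < γ₁`, then `X` contains a ray `{s y}` from the origin. For `δ > 0`
small and `u` large, the function `s ↦ g(s y, u δ w)` is negative at `u ^ γ₂`, positive at
`(δ u) ^ γ₂` and negative at `u ^ γ₁`, in this order, which contradicts quasiconvexity.

Once `γ₁ = γ₂`, the same values of `g` have nonzero limits relative to `u ^ ρ₁` and to `u ^ ρ₂`, so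
`ρ₁ = ρ₂`.
-/

theorem tendsto_rpow_atTop_zero_of_neg {γ : ℝ} (hγ : γ < 0) :
    Tendsto (fun u : ℝ => u ^ γ) atTop (𝓝 0) := by
  simpa only [neg_neg] using tendsto_rpow_neg_atTop (neg_pos.2 hγ)

theorem eventually_rpow_ne_zero (γ : ℝ) : ∀ᶠ u : ℝ in atTop, u ^ γ ≠ 0 := by
  filter_upwards [eventually_gt_atTop 0] with u hu using (Real.rpow_pos_of_pos hu γ).ne'

theorem le_of_tendsto_div_rpow {f : ℝ → ℝ} {ρ₁ ρ₂ a b : ℝ}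
    (ha : Tendsto (fun u => f u / u ^ ρ₁) atTop (𝓝 a))
    (hb : Tendsto (fun u => f u / u ^ ρ₂) atTop (𝓝 b)) (hb₀ : b ≠ 0) : ρ₂ ≤ ρ₁ := by
  by_contra! hlt
  have hzero : Tendsto (fun u => f u / u ^ ρ₁ * u ^ (ρ₁ - ρ₂)) atTop (𝓝 0) := by
    simpa only [mul_zero] using ha.mul (tendsto_rpow_atTop_zero_of_neg (sub_neg.2 hlt))
  refine hb₀ (tendsto_nhds_unique (hb.congr' ?_) hzero)
  filter_upwards [eventually_gt_atTop 0] with u hu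
  have hu₁ := (Real.rpow_pos_of_pos hu ρ₁).ne'
  rw [Real.rpow_sub hu]
  field_simp

section Scaling

variable {ι E : Type*} {l : Filter ι} {c : ι → ℝ}

theorem tendsto_inv_smul_smul [TopologicalSpace E] [AddCommGroup E] [Module ℝ E]
    (hc : ∀ᶠ i in l, c i ≠ 0) (y : E) : Tendsto (fun i => (c i)⁻¹ • c i • y) l (𝓝 y) :=
  tendsto_const_nhds.congr' (hc.mono fun _ hi => (inv_smul_smul₀ hi y).symm)

theorem tendsto_smul_nhdsGT_zero [TopologicalSpace E] [AddCommGroup E] [Module ℝ E]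
    [ContinuousSMul ℝ E] (y : E) : Tendsto (fun s : ℝ => s • y) (𝓝[>] 0) (𝓝 0) := by
  have hcont : Continuous fun s : ℝ => s • y := by fun_prop
  exact (hcont.tendsto' 0 0 (zero_smul ℝ y)).mono_left nhdsWithin_le_nhds

theorem smul_mem_of_convex_of_mem_Icc [AddCommGroup E] [Module ℝ E] {K : Set E}
    (hK : Convex ℝ K) {y : E} {a b s : ℝ} (ha : a • y ∈ K) (hb : b • y ∈ K)
    (hs : s ∈ Icc a b) : s • y ∈ K :=
  (hK.linear_preimage (LinearMap.toSpanSingleton ℝ E y)).ordConnected.out ha hb hs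

theorem exists_mem_tendsto_inv_smul_of_mem_closure [NormedAddCommGroup E] [NormedSpace ℝ E]
    [ProperSpace E] {X : Set E} (hX : IsClosed X) (hne : X.Nonempty) (hc : ∀ᶠ i in l, c i ≠ 0)
    {y : E} (hy : y ∈ closure {b | ∀ᶠ i in l, c i • b ∈ X}) :
    ∃ x : ι → E, (∀ i, x i ∈ X) ∧ Tendsto (fun i => (c i)⁻¹ • x i) l (𝓝 y) := by
  choose x hxX hx using fun i => hX.exists_infDist_eq_dist hne (c i • y)
  refine ⟨x, hxX, Metric.tendsto_nhds.2 fun ε hε => ?_⟩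
  obtain ⟨b, hb, hyb⟩ := Metric.mem_closure_iff.1 hy ε hε
  filter_upwards [hc, hb] with i hci hbi
  calc dist ((c i)⁻¹ • x i) y
      = ‖(c i)⁻¹‖ * dist (c i • y) (x i) := by
        rw [dist_comm, ← dist_smul₀, inv_smul_smul₀ hci]
    _ ≤ ‖(c i)⁻¹‖ * dist (c i • y) (c i • b) := by
        gcongr
        exact hx i ▸ Metric.infDist_le_dist_of_mem hbi
    _ = dist y b := by rw [← dist_smul₀, inv_smul_smul₀ hci, inv_smul_smul₀ hci]
    _ < ε := hyb

end Scaling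

section AsymCone

variable {n : ℕ} {X : Set (Rn n)} {γ : ℝ} {y : Rn n}

theorem IsPosCone.zero_mem {Z : Set (Rn n)} (hZ : IsPosCone Z) (hclosed : IsClosed Z)
    (hne : Z.Nonempty) : (0 : Rn n) ∈ Z := by
  obtain ⟨z, hz⟩ := hne
  exact hclosed.mem_of_tendsto (tendsto_smul_nhdsGT_zero z)
    (eventually_mem_nhdsWithin.mono fun c hc => hZ c hc z hz)

theorem nonempty_of_mem_asymCone (hy : y ∈ asymCone X γ) : X.Nonempty := by
  obtain ⟨a, -, ha, -⟩ := hy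
  exact ⟨a 0, ha 0⟩

theorem asymCone_mul_subset {r : ℝ} (hr : 0 < r) : asymCone X (r * γ) ⊆ asymCone X γ := by
  rintro y ⟨a, lam, ha, hpos, hlam, hlim⟩
  refine ⟨a, fun k => lam k ^ r, ha, fun k => Real.rpow_pos_of_pos (hpos k) r,
    (tendsto_rpow_atTop hr).comp hlam, ?_⟩
  simpa only [← Real.rpow_mul (hpos _).le] using hlim

theorem mem_asymCone_of_forall_smul_mem (hray : ∀ s : ℝ, 0 < s → s • y ∈ X) (γ : ℝ) :
    y ∈ asymCone X γ := by
  have hlam : Tendsto (fun k : ℕ => (k : ℝ) + 1) atTop atTop :=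
    tendsto_atTop_add_const_right _ 1 tendsto_natCast_atTop_atTop
  have hpos (k : ℕ) : (0 : ℝ) < k + 1 := by positivity
  exact ⟨fun k => ((k : ℝ) + 1) ^ γ • y, fun k => k + 1,
    fun k => hray _ (Real.rpow_pos_of_pos (hpos k) γ), hpos, hlam,
    tendsto_inv_smul_smul (.of_forall fun k => (Real.rpow_pos_of_pos (hpos k) γ).ne') y⟩

theorem asymCone_subset_asymptoticCone_of_pos (hγ : 0 < γ) :
    asymCone X γ ⊆ asymptoticCone ℝ X := by
  rintro y ⟨a, lam, ha, hpos, hlam, hlim⟩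
  have hasymp := ((tendsto_rpow_atTop hγ).comp hlam).atTop_smul_nhds_tendsto_asymptoticNhds hlim
  refine hasymp.frequently (Eventually.of_forall fun k => ?_).frequently
  rw [Function.comp_apply, smul_inv_smul₀ (Real.rpow_pos_of_pos (hpos k) γ).ne']
  exact ha k

theorem add_smul_mem_of_mem_asymCone (hX : IsClosed X) (hconv : Convex ℝ X) (hγ : 0 < γ)
    (hy : y ∈ asymCone X γ) {x : Rn n} (hx : x ∈ X) {s : ℝ} (hs : 0 ≤ s) : x + s • y ∈ X := by
  rw [add_comm]
  exact hconv.smul_vadd_mem_of_isClosed_of_mem_asymptoticCone hX hs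
    (asymCone_subset_asymptoticCone_of_pos hγ hy) hx

theorem zero_mem_of_mem_asymCone_of_neg (hX : IsClosed X) (hγ : γ < 0) (hy : y ∈ asymCone X γ) :
    (0 : Rn n) ∈ X := by
  obtain ⟨a, lam, ha, hpos, hlam, hlim⟩ := hy
  have ha₀ : Tendsto a atTop (𝓝 0) := by
    simpa only [zero_smul, Function.comp_apply,
      smul_inv_smul₀ (Real.rpow_pos_of_pos (hpos _) γ).ne'] using
      ((tendsto_rpow_atTop_zero_of_neg hγ).comp hlam).smul hlim
  exact hX.mem_of_tendsto ha₀ (.of_forall ha)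

theorem mem_closure_eventually_smul_mem_of_mem_asymCone_of_neg (hX : IsClosed X)
    (hconv : Convex ℝ X) (hγ : γ < 0) (hy : y ∈ asymCone X γ) :
    y ∈ closure {b | ∀ᶠ u : ℝ in atTop, u ^ γ • b ∈ X} := by
  have hzero := zero_mem_of_mem_asymCone_of_neg hX hγ hy
  obtain ⟨a, lam, ha, hpos, -, hlim⟩ := hy
  refine mem_closure_of_tendsto hlim (.of_forall fun k => ?_)
  have hlam : 0 < lam k ^ γ := Real.rpow_pos_of_pos (hpos k) γ
  filter_upwards [eventually_gt_atTop 0,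
    (tendsto_rpow_atTop_zero_of_neg hγ).eventually_le_const hlam] with u hu hle
  rw [smul_smul, ← div_eq_mul_inv]
  exact hconv.smul_mem_of_zero_mem hzero (ha k)
    ⟨div_nonneg (Real.rpow_nonneg hu.le γ) hlam.le, div_le_one_of_le₀ hle hlam.le⟩

theorem exists_mem_tendsto_of_mem_asymCone (hX : IsClosed X) (hconv : Convex ℝ X) (hγ : γ ≠ 0)
    (hy : y ∈ asymCone X γ) :
    ∃ x : ℝ → Rn n, (∀ u, 0 < u → x u ∈ X) ∧
      Tendsto (fun u => (u ^ γ)⁻¹ • x u) atTop (𝓝 y) := by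
  obtain ⟨x₀, hx₀⟩ := nonempty_of_mem_asymCone hy
  rcases hγ.lt_or_gt with hneg | hpos
  · obtain ⟨x, hx, hlim⟩ := exists_mem_tendsto_inv_smul_of_mem_closure hX ⟨x₀, hx₀⟩
      (eventually_rpow_ne_zero γ)
      (mem_closure_eventually_smul_mem_of_mem_asymCone_of_neg hX hconv hneg hy)
    exact ⟨x, fun u _ => hx u, hlim⟩
  · refine ⟨fun u => x₀ + u ^ γ • y, fun u hu => add_smul_mem_of_mem_asymCone hX hconv hpos hy hx₀
      (Real.rpow_nonneg hu.le γ), ?_⟩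
    simpa only [smul_add, zero_smul, zero_add, Function.comp_apply] using
      ((tendsto_inv_atTop_zero.comp (tendsto_rpow_atTop hpos)).smul_const x₀).add
        (tendsto_inv_smul_smul (eventually_rpow_ne_zero γ) y)

end AsymCone

section ScalingLimits

variable {n m : ℕ} {X : Set (Rn n)} {Ξ : Set (Rn m)} {g : Rn n → Rn m → ℝ}
  {γ γ₁ γ₂ ρ ρ₁ ρ₂ : ℝ} {gs gs₁ gs₂ : Rn n → Rn m → ℝ}

namespace CondA1

section Sign

variable {x : ℝ → Rn n} {z : ℝ → Rn m} {y : Rn n} {w : Rn m}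

theorem eventually_neg (hA1 : CondA1 X Ξ g γ ρ gs) (hy : y ∈ asymCone X γ) (hw : w ∈ Ξ)
    (hneg : gs y w < 0) (hx : ∀ u, 0 < u → x u ∈ X) (hz : ∀ u, 0 < u → z u ∈ Ξ)
    (hxy : Tendsto (fun u => (u ^ γ)⁻¹ • x u) atTop (𝓝 y))
    (hzw : Tendsto (fun u => u⁻¹ • z u) atTop (𝓝 w)) :
    ∀ᶠ u in atTop, g (x u) (z u) < 0 := by
  filter_upwards [eventually_gt_atTop 0,
    (hA1.2 y hy w hw x z hx hz hxy hzw).eventually_lt_const hneg] with u hu hlt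
  exact neg_of_div_neg_left hlt (Real.rpow_nonneg hu.le ρ)

theorem eventually_pos (hA1 : CondA1 X Ξ g γ ρ gs) (hy : y ∈ asymCone X γ) (hw : w ∈ Ξ)
    (hpos : 0 < gs y w) (hx : ∀ u, 0 < u → x u ∈ X) (hz : ∀ u, 0 < u → z u ∈ Ξ)
    (hxy : Tendsto (fun u => (u ^ γ)⁻¹ • x u) atTop (𝓝 y))
    (hzw : Tendsto (fun u => u⁻¹ • z u) atTop (𝓝 w)) :
    ∀ᶠ u in atTop, 0 < g (x u) (z u) := by
  filter_upwards [eventually_gt_atTop 0,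
    (hA1.2 y hy w hw x z hx hz hxy hzw).eventually_const_lt hpos] with u hu hlt
  exact (div_pos_iff_of_pos_right (Real.rpow_pos_of_pos hu ρ)).1 hlt

theorem eventually_neg_on_ray (hA1 : CondA1 X Ξ g γ ρ gs) (hΞ : IsPosCone Ξ)
    (hray : ∀ s : ℝ, 0 < s → s • y ∈ X) (hw : w ∈ Ξ) (hneg : gs y w < 0) :
    ∀ᶠ u : ℝ in atTop, g (u ^ γ • y) (u • w) < 0 :=
  hA1.eventually_neg (mem_asymCone_of_forall_smul_mem hray γ) hw hneg
    (fun _ hu => hray _ (Real.rpow_pos_of_pos hu γ)) (fun u hu => hΞ u hu w hw)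
    (tendsto_inv_smul_smul (eventually_rpow_ne_zero γ) y)
    (tendsto_inv_smul_smul (eventually_ne_atTop 0) w)

theorem eventually_pos_on_ray (hA1 : CondA1 X Ξ g γ ρ gs) (hΞ : IsPosCone Ξ)
    (hray : ∀ s : ℝ, 0 < s → s • y ∈ X) (hw : w ∈ Ξ) (hpos : 0 < gs y w) :
    ∀ᶠ u : ℝ in atTop, 0 < g (u ^ γ • y) (u • w) :=
  hA1.eventually_pos (mem_asymCone_of_forall_smul_mem hray γ) hw hpos
    (fun _ hu => hray _ (Real.rpow_pos_of_pos hu γ)) (fun u hu => hΞ u hu w hw)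
    (tendsto_inv_smul_smul (eventually_rpow_ne_zero γ) y)
    (tendsto_inv_smul_smul (eventually_ne_atTop 0) w)

end Sign

theorem eventually_limit_smul_neg (hA1 : CondA1 X Ξ g γ ρ gs) (hΞ : IsPosCone Ξ)
    (h0 : (0 : Rn m) ∈ Ξ) {y : Rn n} (hy : y ∈ asymCone X γ) {w : Rn m} (hw : w ∈ Ξ)
    (hneg : gs y 0 < 0) : ∀ᶠ δ : ℝ in 𝓝[>] 0, gs y (δ • w) < 0 := by
  have hpath : Tendsto (fun δ : ℝ => (y, δ • w)) (𝓝[>] 0) (𝓝[asymCone X γ ×ˢ Ξ] (y, 0)) := by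
    refine tendsto_nhdsWithin_iff.2 ⟨?_,
      eventually_mem_nhdsWithin.mono fun δ hδ => ⟨hy, hΞ δ hδ w hw⟩⟩
    exact tendsto_const_nhds.prodMk_nhds (tendsto_smul_nhdsGT_zero w)
  exact ((hA1.1 (y, 0) ⟨hy, h0⟩).tendsto.comp hpath).eventually_lt_const hneg

theorem one_le_of_gamma_eq_mul {r : ℝ} (hX : IsClosed X) (hconv : Convex ℝ X) (hΞ : IsPosCone Ξ)
    (h0 : (0 : Rn m) ∈ Ξ) (hr : 0 < r) (hmul : γ₁ = r * γ₂) (hγ₁ : γ₁ ≠ 0)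
    (h₁A1 : CondA1 X Ξ g γ₁ ρ₁ gs₁) (h₁A2 : CondA2 X γ₁) (h₁A3 : CondA3 X γ₁ gs₁)
    (h₂A1 : CondA1 X Ξ g γ₂ ρ₂ gs₂) (h₂A4 : CondA4 X Ξ γ₂ gs₂) : 1 ≤ r := by
  subst hmul
  by_contra! hr₁
  obtain ⟨y, hy, hy₀⟩ := h₁A2
  have hy' := asymCone_mul_subset hr hy
  obtain ⟨x, hxX, hxy⟩ := exists_mem_tendsto_of_mem_asymCone hX hconv hγ₁ hy
  obtain ⟨w, hw, hpos⟩ := h₂A4 y ⟨hy', hy₀⟩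
  have hnegative : ∀ᶠ u : ℝ in atTop, g (x u) (u ^ r • w) < 0 := by
    refine h₁A1.eventually_neg hy h0 (h₁A3 y ⟨hy, hy₀⟩) hxX
      (fun u hu => hΞ _ (Real.rpow_pos_of_pos hu r) w hw) hxy ?_
    have hlim := (tendsto_rpow_atTop_zero_of_neg (sub_neg.2 hr₁)).smul_const w
    rw [zero_smul] at hlim
    refine hlim.congr' ?_
    filter_upwards [eventually_gt_atTop 0] with u hu
    rw [smul_smul, Real.rpow_sub_one hu.ne', div_eq_inv_mul]
  have hpositive : ∀ᶠ v : ℝ in atTop, 0 < g (x (v ^ r⁻¹)) (v • w) := by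
    refine h₂A1.eventually_pos hy' hw hpos (fun v hv => hxX _ (Real.rpow_pos_of_pos hv _))
      (fun v hv => hΞ v hv w hw) ?_ (tendsto_inv_smul_smul (eventually_ne_atTop 0) w)
    refine (hxy.comp (tendsto_rpow_atTop (inv_pos.2 hr))).congr' ?_
    filter_upwards [eventually_gt_atTop 0] with v hv
    rw [Function.comp_apply, ← Real.rpow_mul hv.le, inv_mul_cancel_left₀ hr.ne']
  obtain ⟨u, hu, hneg_u, hpos_u⟩ := ((eventually_gt_atTop 0).and
    (hnegative.and ((tendsto_rpow_atTop hr).eventually hpositive))).exists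
  rw [Real.rpow_rpow_inv hu.le hr.ne'] at hpos_u
  exact hneg_u.not_gt hpos_u

theorem gamma_eq_of_div_pos (hX : IsClosed X) (hconv : Convex ℝ X) (hΞ : IsPosCone Ξ)
    (h0 : (0 : Rn m) ∈ Ξ) (hsign : 0 < γ₁ / γ₂)
    (h₁A1 : CondA1 X Ξ g γ₁ ρ₁ gs₁) (h₁A2 : CondA2 X γ₁) (h₁A3 : CondA3 X γ₁ gs₁)
    (h₁A4 : CondA4 X Ξ γ₁ gs₁) (h₂A1 : CondA1 X Ξ g γ₂ ρ₂ gs₂) (h₂A2 : CondA2 X γ₂)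
    (h₂A3 : CondA3 X γ₂ gs₂) (h₂A4 : CondA4 X Ξ γ₂ gs₂) : γ₁ = γ₂ := by
  obtain ⟨hγ₁, hγ₂⟩ : γ₁ ≠ 0 ∧ γ₂ ≠ 0 := div_ne_zero_iff.1 hsign.ne'
  have hge : 1 ≤ γ₁ / γ₂ := one_le_of_gamma_eq_mul hX hconv hΞ h0 hsign
    (div_mul_cancel₀ γ₁ hγ₂).symm hγ₁ h₁A1 h₁A2 h₁A3 h₂A1 h₂A4
  have hle : 1 ≤ γ₂ / γ₁ := one_le_of_gamma_eq_mul hX hconv hΞ h0 (inv_div γ₁ γ₂ ▸ inv_pos.2 hsign)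
    (div_mul_cancel₀ γ₂ hγ₁).symm hγ₂ h₂A1 h₂A2 h₂A3 h₁A1 h₁A4
  rw [← inv_div, one_le_inv₀ hsign] at hle
  exact (div_eq_one_iff_eq hγ₂).1 (hle.antisymm hge)

theorem gamma_nonneg_of_pos (hX : IsClosed X) (hΞ : IsPosCone Ξ) (h0 : (0 : Rn m) ∈ Ξ)
    (hg : ∀ z ∈ Ξ, QuasiconvexOn ℝ X fun x => g x z) (hγ₁ : 0 < γ₁)
    (h₁A1 : CondA1 X Ξ g γ₁ ρ₁ gs₁) (h₁A2 : CondA2 X γ₁) (h₁A3 : CondA3 X γ₁ gs₁)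
    (h₂A1 : CondA1 X Ξ g γ₂ ρ₂ gs₂) (h₂A2 : CondA2 X γ₂) (h₂A3 : CondA3 X γ₂ gs₂)
    (h₂A4 : CondA4 X Ξ γ₂ gs₂) : 0 ≤ γ₂ := by
  by_contra! hγ₂
  obtain ⟨y, hy₁, hy₀⟩ := h₁A2
  obtain ⟨y', hy', -⟩ := h₂A2
  have hray (s : ℝ) (hs : 0 < s) : s • y ∈ X := by
    simpa only [zero_add] using add_smul_mem_of_mem_asymCone hX (hg 0 h0).convex hγ₁ hy₁
      (zero_mem_of_mem_asymCone_of_neg hX hγ₂ hy') hs.le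
  have hy₂ : y ∈ asymCone X γ₂ := mem_asymCone_of_forall_smul_mem hray γ₂
  obtain ⟨w, hw, hpos⟩ := h₂A4 y ⟨hy₂, hy₀⟩
  have hsmall : ∀ᶠ δ : ℝ in 𝓝[>] 0, δ ∈ Ioo 0 1 := Ioo_mem_nhdsGT zero_lt_one
  obtain ⟨δ, ⟨hδ₀, hδ₁⟩, hneg₁, hneg₂⟩ := (hsmall.and
    ((h₁A1.eventually_limit_smul_neg hΞ h0 hy₁ hw (h₁A3 y ⟨hy₁, hy₀⟩)).and
      (h₂A1.eventually_limit_smul_neg hΞ h0 hy₂ hw (h₂A3 y ⟨hy₂, hy₀⟩)))).exists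
  have hδw : δ • w ∈ Ξ := hΞ δ hδ₀ w hw
  have hδu : Tendsto (fun u : ℝ => δ * u) atTop atTop := tendsto_id.const_mul_atTop hδ₀
  obtain ⟨u, hu, hu₁, hright, hleft, hmid⟩ := ((eventually_gt_atTop 0).and
    ((hδu.eventually_ge_atTop 1).and
      ((h₁A1.eventually_neg_on_ray hΞ hray hδw hneg₁).and
        ((h₂A1.eventually_neg_on_ray hΞ hray hδw hneg₂).and
          (hδu.eventually (h₂A1.eventually_pos_on_ray hΞ hray hw hpos)))))).exists
  have hleft_le : u ^ γ₂ ≤ (δ * u) ^ γ₂ :=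
    Real.rpow_le_rpow_of_nonpos (mul_pos hδ₀ hu) (mul_le_of_le_one_left hu.le hδ₁.le) hγ₂.le
  have hle_right : (δ * u) ^ γ₂ ≤ u ^ γ₁ :=
    (Real.rpow_le_one_of_one_le_of_nonpos hu₁ hγ₂.le).trans
      (Real.one_le_rpow (hu₁.trans (mul_le_of_le_one_left hu.le hδ₁.le)) hγ₁.le)
  have hmid_neg := smul_mem_of_convex_of_mem_Icc ((hg _ (hΞ u hu _ hδw)).convex_lt 0)
    ⟨hray _ (Real.rpow_pos_of_pos hu γ₂), hleft⟩ ⟨hray _ (Real.rpow_pos_of_pos hu γ₁), hright⟩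
    ⟨hleft_le, hle_right⟩
  rw [mul_comm δ u, mul_smul] at hmid
  rw [mul_comm δ u] at hmid_neg
  exact hmid.not_gt hmid_neg.2

theorem rho_le_of_ne_zero (hX : IsClosed X) (hconv : Convex ℝ X) (hΞ : IsPosCone Ξ) (hγ : γ ≠ 0)
    (h₁A1 : CondA1 X Ξ g γ ρ₁ gs₁) (h₂A1 : CondA1 X Ξ g γ ρ₂ gs₂) {y : Rn n}
    (hy : y ∈ asymCone X γ) {w : Rn m} (hw : w ∈ Ξ) (hne : gs₂ y w ≠ 0) : ρ₂ ≤ ρ₁ := by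
  obtain ⟨x, hxX, hxy⟩ := exists_mem_tendsto_of_mem_asymCone hX hconv hγ hy
  have hz (u : ℝ) (hu : 0 < u) : u • w ∈ Ξ := hΞ u hu w hw
  have hzw : Tendsto (fun u : ℝ => u⁻¹ • u • w) atTop (𝓝 w) :=
    tendsto_inv_smul_smul (eventually_ne_atTop 0) w
  exact le_of_tendsto_div_rpow (h₁A1.2 y hy w hw x _ hxX hz hxy hzw)
    (h₂A1.2 y hy w hw x _ hxX hz hxy hzw) hne

theorem gamma_div_pos (hX : IsClosed X) (hΞ : IsPosCone Ξ) (h0 : (0 : Rn m) ∈ Ξ)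
    (hg : ∀ z ∈ Ξ, QuasiconvexOn ℝ X fun x => g x z) (hγ₁ : γ₁ ≠ 0) (hγ₂ : γ₂ ≠ 0)
    (h₁A1 : CondA1 X Ξ g γ₁ ρ₁ gs₁) (h₁A2 : CondA2 X γ₁) (h₁A3 : CondA3 X γ₁ gs₁)
    (h₁A4 : CondA4 X Ξ γ₁ gs₁) (h₂A1 : CondA1 X Ξ g γ₂ ρ₂ gs₂) (h₂A2 : CondA2 X γ₂)
    (h₂A3 : CondA3 X γ₂ gs₂) (h₂A4 : CondA4 X Ξ γ₂ gs₂) : 0 < γ₁ / γ₂ := by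
  rcases hγ₁.lt_or_gt with hneg₁ | hpos₁
  · refine div_pos_of_neg_of_neg hneg₁ (hγ₂.lt_or_gt.resolve_right fun hpos₂ => hneg₁.not_ge ?_)
    exact gamma_nonneg_of_pos hX hΞ h0 hg hpos₂ h₂A1 h₂A2 h₂A3 h₁A1 h₁A2 h₁A3 h₁A4
  · have hnonneg := gamma_nonneg_of_pos hX hΞ h0 hg hpos₁ h₁A1 h₁A2 h₁A3 h₂A1 h₂A2 h₂A3 h₂A4
    exact div_pos hpos₁ (hnonneg.lt_of_ne' hγ₂)

end CondA1

end ScalingLimits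

theorem scaling_exponents_unique_general {n m : ℕ} {X : Set (Rn n)} {Ξ : Set (Rn m)}
    {g : Rn n → Rn m → ℝ} (hX : IsClosed X) (hΞ : IsPosCone Ξ) (h0 : (0 : Rn m) ∈ Ξ)
    (hg : ∀ z ∈ Ξ, QuasiconvexOn ℝ X fun x => g x z)
    {γ₁ ρ₁ γ₂ ρ₂ : ℝ} {gs₁ gs₂ : Rn n → Rn m → ℝ} (hγ₁ : γ₁ ≠ 0) (hγ₂ : γ₂ ≠ 0)
    (h₁A1 : CondA1 X Ξ g γ₁ ρ₁ gs₁) (h₁A2 : CondA2 X γ₁)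
    (h₁A3 : CondA3 X γ₁ gs₁) (h₁A4 : CondA4 X Ξ γ₁ gs₁)
    (h₂A1 : CondA1 X Ξ g γ₂ ρ₂ gs₂) (h₂A2 : CondA2 X γ₂)
    (h₂A3 : CondA3 X γ₂ gs₂) (h₂A4 : CondA4 X Ξ γ₂ gs₂) :
    γ₁ = γ₂ ∧ ρ₁ = ρ₂ := by
  have hconv : Convex ℝ X := (hg 0 h0).convex
  have hsign : 0 < γ₁ / γ₂ := h₁A1.gamma_div_pos hX hΞ h0 hg hγ₁ hγ₂ h₁A2 h₁A3 h₁A4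
    h₂A1 h₂A2 h₂A3 h₂A4
  obtain rfl : γ₁ = γ₂ := h₁A1.gamma_eq_of_div_pos hX hconv hΞ h0 hsign h₁A2 h₁A3 h₁A4
    h₂A1 h₂A2 h₂A3 h₂A4
  obtain ⟨y, hy⟩ := h₁A2
  have hle : ρ₁ ≤ ρ₂ := h₂A1.rho_le_of_ne_zero hX hconv hΞ hγ₁ h₁A1 hy.1 h0 (h₁A3 y hy).ne
  have hge : ρ₂ ≤ ρ₁ := h₁A1.rho_le_of_ne_zero hX hconv hΞ hγ₁ h₂A1 hy.1 h0 (h₂A3 y hy).ne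
  exact ⟨rfl, hle.antisymm hge⟩

/-- Uniqueness of the scaling exponents: if two triples `(γ₁, ρ₁, gs₁)` and
`(γ₂, ρ₂, gs₂)` both satisfy conditions (A1)–(A4) for the same `g`, then
`γ₁ = γ₂` and `ρ₁ = ρ₂`. -/
theorem scaling_exponents_unique {n m : ℕ} (X : Set (Rn n)) (Ξ : Set (Rn m))
    (g : Rn n → Rn m → ℝ) (hreg : GRegular X Ξ g)
    (γ₁ ρ₁ γ₂ ρ₂ : ℝ) (gs₁ gs₂ : Rn n → Rn m → ℝ)
    (hγ₁ : γ₁ ≠ 0) (hγ₂ : γ₂ ≠ 0) (hρ₁ : 0 ≤ ρ₁) (hρ₂ : 0 ≤ ρ₂)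
    (h₁A1 : CondA1 X Ξ g γ₁ ρ₁ gs₁) (h₁A2 : CondA2 X γ₁)
    (h₁A3 : CondA3 X γ₁ gs₁) (h₁A4 : CondA4 X Ξ γ₁ gs₁)
    (h₂A1 : CondA1 X Ξ g γ₂ ρ₂ gs₂) (h₂A2 : CondA2 X γ₂)
    (h₂A3 : CondA3 X γ₂ gs₂) (h₂A4 : CondA4 X Ξ γ₂ gs₂) :
    γ₁ = γ₂ ∧ ρ₁ = ρ₂ := by
  obtain ⟨-, hX, -, hΞne, hΞclosed, hΞ, hgconv, -, -⟩ := hreg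
  exact scaling_exponents_unique_general hX hΞ (hΞ.zero_mem hΞclosed hΞne)
    (fun z hz => (hgconv z hz).quasiconvexOn) hγ₁ hγ₂ h₁A1 h₁A2 h₁A3 h₁A4 h₂A1 h₂A2 h₂A3 h₂A4
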